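/- Let x₀ ∈ (0,1) and let φ be a continuous increasing function on ℝ₊ with φ(0) = 0 and φ(2x) < 2φ(x) for all x ∈ (0,x₀). Then there exist a compact set E_φ ⊆ [0,x₀], a Borel probability measure ν supported on E_φ, and a constant c ≥ 1 such that c^{−1} φ(r) ≤ ν([x−r, x+r]) ≤ c φ(r) for all r ∈ (0,x₀] and all x ∈ E_φ. -/

import Mathlib

open MeasureTheory Set

/-! The proof builds a Cantor measure adapted to the dyadic levels of `φ`. Let `l n` be the point at
which `φ` reaches `2⁻ⁿ φ(x₀)`. Since `φ(2x) ≤ 2φ(x)`, we have `l (n + 1) ≤ l n / 2`, so an interval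
of length `l n` has room for two intervals of length `l (n + 1)` with disjoint interiors, one at
each end. Iterating gives `2ⁿ` intervals of length `l n` with `l n`-separated left endpoints, and
the uniform measure on binary sequences gives each of them mass `2⁻ⁿ`. If `l n < r ≤ l (n - 1)`,
then an interval of radius `r` centred at a point of the Cantor set contains one `n`-th generation
interval and meets a bounded number of `(n - 1)`-st generation ones, so its mass is comparable to
`2⁻ⁿ`, hence to `φ(r)`.
-/

open PiNat (cylinder)

/-- Admissible interval lengths for the generations of a Cantor set in `ℝ`: two intervals of length
`l (n + 1)` fit into one of length `l n`. Zero lengths are allowed, and then the set is finite. -/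
structure IsCantorScale (l : ℕ → ℝ) : Prop where
  nonneg : ∀ n, 0 ≤ l n
  succ_le_half : ∀ n, l (n + 1) ≤ l n / 2

/-- The displacement of the left endpoint from generation `i` to generation `i + 1` when the left
(`false`) or the right (`true`) subinterval is chosen according to `x i`. -/
noncomputable def cantorShift (l : ℕ → ℝ) (x : ℕ → Bool) (i : ℕ) : ℝ :=
  if x i then l i - l (i + 1) else 0

/-- The left endpoint of the `n`-th generation interval with address `x 0, …, x (n - 1)`. -/
noncomputable def cantorLeft (l : ℕ → ℝ) (n : ℕ) (x : ℕ → Bool) : ℝ :=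
  ∑ i ∈ Finset.range n, cantorShift l x i

/-- The point of the Cantor set with interval lengths `l` whose infinite address is `x`. The Cantor
set itself is the range of `cantorPoint l`. -/
noncomputable def cantorPoint (l : ℕ → ℝ) (x : ℕ → Bool) : ℝ :=
  ∑' i, cantorShift l x i

/-- The law of a sequence of independent fair coin flips. -/
noncomputable def coinMeasure : Measure (ℕ → Bool) :=
  Measure.infinitePi fun _ ↦ (PMF.uniformOfFintype Bool).toMeasure

instance : IsProbabilityMeasure coinMeasure := by
  unfold coinMeasure
  infer_instance

/-- The natural measure on the Cantor set with interval lengths `l`, which splits the mass of every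
interval evenly between its two subintervals. -/
noncomputable def cantorMeasure (l : ℕ → ℝ) : Measure ℝ :=
  coinMeasure.map (cantorPoint l)

theorem coinMeasure_real_cylinder (x : ℕ → Bool) (n : ℕ) :
    coinMeasure.real (cylinder x n) = 2⁻¹ ^ n := by
  rw [measureReal_def, PiNat.cylinder_eq_pi, coinMeasure,
    Measure.infinitePi_pi _ fun i _ ↦ MeasurableSet.singleton (x i)]
  simp [PMF.toMeasure_apply_singleton _ _ (MeasurableSet.singleton _)]

theorem cantorLeft_succ (l : ℕ → ℝ) (n : ℕ) (x : ℕ → Bool) :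
    cantorLeft l (n + 1) x = cantorLeft l n x + cantorShift l x n :=
  Finset.sum_range_succ _ _

theorem cantorLeft_eq_of_mem_cylinder (l : ℕ → ℝ) {n : ℕ} {x y : ℕ → Bool}
    (hy : y ∈ cylinder x n) : cantorLeft l n y = cantorLeft l n x :=
  Finset.sum_congr rfl fun i hi ↦ by rw [cantorShift, cantorShift, hy i (Finset.mem_range.1 hi)]

theorem abs_cantorShift_sub_of_ne (l : ℕ → ℝ) {i : ℕ} {x y : ℕ → Bool} (hi : y i ≠ x i) :
    |cantorShift l y i - cantorShift l x i| = |l i - l (i + 1)| := by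
  cases hx : x i <;> cases hy : y i <;> simp_all [cantorShift, abs_sub_comm]

namespace IsCantorScale

variable {l : ℕ → ℝ}

theorem succ_le (hl : IsCantorScale l) (n : ℕ) : l (n + 1) ≤ l n := by
  linarith [hl.nonneg n, hl.succ_le_half n]

theorem exists_lt (hl : IsCantorScale l) {r : ℝ} (hr : 0 < r) : ∃ n, l n < r := by
  have geometric (n : ℕ) : l n ≤ 2⁻¹ ^ n * l 0 :=
    le_geom (by norm_num) n fun k _ ↦ by linarith [hl.succ_le_half k]
  have tendsto_zero : Filter.Tendsto (fun n : ℕ ↦ (2⁻¹ : ℝ) ^ n * l 0) .atTop (nhds 0) := by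
    simpa using (tendsto_pow_atTop_nhds_zero_of_lt_one (r := (2⁻¹ : ℝ))
      (by norm_num) (by norm_num)).mul_const (l 0)
  obtain ⟨n, hn⟩ := (tendsto_zero.eventually_lt_const hr).exists
  exact ⟨n, (geometric n).trans_lt hn⟩

theorem exists_generation (hl : IsCantorScale l) {r : ℝ} (hr : 0 < r) :
    ∃ n, l n < r ∧ ∀ m < n, r ≤ l m := by
  classical
  exact ⟨Nat.find (hl.exists_lt hr), Nat.find_spec (hl.exists_lt hr),
    fun _ hm ↦ not_lt.1 (Nat.find_min _ hm)⟩

theorem cantorShift_mem_Icc (hl : IsCantorScale l) (x : ℕ → Bool) (i : ℕ) :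
    cantorShift l x i ∈ Icc 0 (l i - l (i + 1)) := by
  have := hl.succ_le i
  unfold cantorShift
  split_ifs <;> constructor <;> linarith

theorem summable_sub_succ (hl : IsCantorScale l) : Summable fun i ↦ l i - l (i + 1) := by
  refine summable_of_sum_range_le (c := l 0) (fun n ↦ sub_nonneg.2 (hl.succ_le n)) fun n ↦ ?_
  rw [Finset.sum_range_sub']
  linarith [hl.nonneg n]

theorem summable_cantorShift (hl : IsCantorScale l) (x : ℕ → Bool) :
    Summable (cantorShift l x) :=
  .of_nonneg_of_le (fun i ↦ (hl.cantorShift_mem_Icc x i).1)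
    (fun i ↦ (hl.cantorShift_mem_Icc x i).2) hl.summable_sub_succ

theorem continuous_cantorPoint (hl : IsCantorScale l) : Continuous (cantorPoint l) := by
  refine continuous_tsum (fun i ↦ ?_) hl.summable_sub_succ fun i x ↦ ?_
  · have continuous_choice : Continuous fun b : Bool ↦ if b then l i - l (i + 1) else 0 :=
      continuous_of_discreteTopology
    exact continuous_choice.comp (continuous_apply i)
  · obtain ⟨shift_nonneg, shift_le⟩ := hl.cantorShift_mem_Icc x i
    rwa [Real.norm_of_nonneg shift_nonneg]

theorem cantorPoint_mem_Icc (hl : IsCantorScale l) (n : ℕ) (x : ℕ → Bool) :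
    cantorPoint l x ∈ Icc (cantorLeft l n x) (cantorLeft l n x + l n) := by
  have rightEndpoint_antitone : Antitone fun m ↦ cantorLeft l m x + l m :=
    antitone_nat_of_succ_le fun m ↦ by
      rw [cantorLeft_succ]
      linarith [(hl.cantorShift_mem_Icc x m).2]
  refine ⟨(hl.summable_cantorShift x).sum_le_tsum _ fun i _ ↦ (hl.cantorShift_mem_Icc x i).1,
    le_of_tendsto (hl.summable_cantorShift x).hasSum.tendsto_sum_nat ?_⟩
  filter_upwards [Filter.eventually_ge_atTop n] with m hm
  exact (le_add_of_nonneg_right (hl.nonneg m)).trans (rightEndpoint_antitone hm)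

theorem le_abs_cantorLeft_sub (hl : IsCantorScale l) {n : ℕ} {x y : ℕ → Bool}
    (hxy : y ∉ cylinder x n) : l n ≤ |cantorLeft l n y - cantorLeft l n x| := by
  induction n with
  | zero => simp at hxy
  | succ n ih =>
    have half := hl.succ_le_half n
    rw [cantorLeft_succ, cantorLeft_succ, add_sub_add_comm]
    by_cases hn : y ∈ cylinder x n
    · have hne : y n ≠ x n := fun h ↦ hxy fun i hi ↦
        (Nat.lt_succ_iff_lt_or_eq.1 hi).elim (hn i) fun hin ↦ hin ▸ h
      rw [cantorLeft_eq_of_mem_cylinder l hn, sub_self, zero_add, abs_cantorShift_sub_of_ne l hne]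
      exact le_trans (by linarith) (le_abs_self _)
    · have shift_diff : |cantorShift l y n - cantorShift l x n| ≤ l n - l (n + 1) := by
        simpa only [Real.dist_eq, sub_zero] using
          Real.dist_le_of_mem_Icc (hl.cantorShift_mem_Icc y n) (hl.cantorShift_mem_Icc x n)
      have := abs_sub_abs_le_abs_add (cantorLeft l n y - cantorLeft l n x)
        (cantorShift l y n - cantorShift l x n)
      linarith [ih hn]

theorem coinMeasure_real_preimage_cantorLeft_Ico_le (hl : IsCantorScale l) (n : ℕ) (a : ℝ) :
    coinMeasure.real (cantorLeft l n ⁻¹' Ico a (a + l n)) ≤ 2⁻¹ ^ n := by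
  obtain hempty | ⟨x, hx⟩ := (cantorLeft l n ⁻¹' Ico a (a + l n)).eq_empty_or_nonempty
  · rw [hempty, measureReal_empty]
    positivity
  · rw [← coinMeasure_real_cylinder x n]
    refine measureReal_mono fun y hy ↦ ?_
    by_contra hxy
    refine (hl.le_abs_cantorLeft_sub hxy).not_gt (abs_sub_lt_iff.2 ⟨?_, ?_⟩) <;>
      linarith [hx.1, hx.2, hy.1, hy.2]

theorem coinMeasure_real_preimage_cantorLeft_Ico_nat_mul_le (hl : IsCantorScale l) (n : ℕ) (a : ℝ)
    (N : ℕ) : coinMeasure.real (cantorLeft l n ⁻¹' Ico a (a + N * l n)) ≤ N * 2⁻¹ ^ n := by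
  induction N with
  | zero => simp
  | succ N ih =>
    have split : cantorLeft l n ⁻¹' Ico a (a + (N * l n + l n)) ⊆
        cantorLeft l n ⁻¹' Ico a (a + N * l n) ∪
          cantorLeft l n ⁻¹' Ico (a + N * l n) (a + N * l n + l n) := by
      rw [← preimage_union, ← add_assoc]
      exact preimage_mono Ico_subset_Ico_union_Ico
    rw [Nat.cast_succ, add_one_mul, add_one_mul]
    exact ((measureReal_mono split).trans (measureReal_union_le _ _)).trans
      (add_le_add ih (hl.coinMeasure_real_preimage_cantorLeft_Ico_le n _))

theorem cantorMeasure_real_Icc (hl : IsCantorScale l) (a b : ℝ) :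
    (cantorMeasure l).real (Icc a b) = coinMeasure.real (cantorPoint l ⁻¹' Icc a b) :=
  map_measureReal_apply hl.continuous_cantorPoint.measurable measurableSet_Icc

theorem isProbabilityMeasure_cantorMeasure (hl : IsCantorScale l) :
    IsProbabilityMeasure (cantorMeasure l) :=
  Measure.isProbabilityMeasure_map hl.continuous_cantorPoint.aemeasurable

theorem isCompact_range_cantorPoint (hl : IsCantorScale l) : IsCompact (range (cantorPoint l)) :=
  isCompact_range hl.continuous_cantorPoint

theorem range_cantorPoint_subset (hl : IsCantorScale l) : range (cantorPoint l) ⊆ Icc 0 (l 0) := by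
  rintro _ ⟨x, rfl⟩
  simpa [cantorLeft] using hl.cantorPoint_mem_Icc 0 x

theorem cantorMeasure_compl_range (hl : IsCantorScale l) :
    cantorMeasure l (range (cantorPoint l))ᶜ = 0 := by
  rw [cantorMeasure, Measure.map_apply hl.continuous_cantorPoint.measurable
    hl.isCompact_range_cantorPoint.measurableSet.compl, preimage_compl, preimage_range,
    compl_univ, measure_empty]

theorem pow_le_cantorMeasure_real_Icc (hl : IsCantorScale l) {n : ℕ} {r t : ℝ} (hr : l n ≤ r)
    (ht : t ∈ range (cantorPoint l)) :
    2⁻¹ ^ n ≤ (cantorMeasure l).real (Icc (t - r) (t + r)) := by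
  obtain ⟨x, rfl⟩ := ht
  rw [hl.cantorMeasure_real_Icc, ← coinMeasure_real_cylinder x n]
  refine measureReal_mono fun y hy ↦ ?_
  have hxI := hl.cantorPoint_mem_Icc n x
  have hyI := hl.cantorPoint_mem_Icc n y
  rw [cantorLeft_eq_of_mem_cylinder l hy] at hyI
  constructor <;> linarith [hxI.1, hxI.2, hyI.1, hyI.2]

theorem cantorMeasure_real_Icc_le (hl : IsCantorScale l) {n : ℕ} {r : ℝ} (hr₀ : 0 < r)
    (hr : r ≤ l n) (t : ℝ) :
    (cantorMeasure l).real (Icc (t - r) (t + r)) ≤ 4 * 2⁻¹ ^ n := by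
  have subset_window : cantorPoint l ⁻¹' Icc (t - r) (t + r) ⊆
      cantorLeft l n ⁻¹' Ico (t - r - l n) (t - r - l n + (4 : ℕ) * l n) := fun x hx ↦ by
    have hxI := hl.cantorPoint_mem_Icc n x
    constructor <;> push_cast <;> linarith [hx.1, hx.2, hxI.1, hxI.2]
  rw [hl.cantorMeasure_real_Icc]
  exact_mod_cast (measureReal_mono subset_window).trans
    (hl.coinMeasure_real_preimage_cantorLeft_Ico_nat_mul_le n (t - r - l n) 4)

end IsCantorScale

/-- The point at which `φ` reaches the fraction `2⁻ⁿ` of its value at `x₀`. As an infimum it is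
meaningful even where a monotone `φ` jumps over that value or attains it on an interval. -/
noncomputable def levelScale (φ : ℝ → ℝ) (x₀ : ℝ) (n : ℕ) : ℝ :=
  sInf {x ∈ Ioc 0 x₀ | 2⁻¹ ^ n * φ x₀ ≤ φ x}

section LevelScale

variable {φ : ℝ → ℝ} {x₀ r : ℝ} {n : ℕ}

theorem levelScale_nonneg (φ : ℝ → ℝ) (x₀ : ℝ) (n : ℕ) : 0 ≤ levelScale φ x₀ n :=
  Real.sInf_nonneg fun _ hx ↦ hx.1.1.le

theorem levelScale_le (hr : r ∈ Ioc 0 x₀) (hφr : 2⁻¹ ^ n * φ x₀ ≤ φ r) :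
    levelScale φ x₀ n ≤ r :=
  csInf_le ⟨0, fun _ hx ↦ hx.1.1.le⟩ ⟨hr, hφr⟩

theorem apply_lt_of_lt_levelScale (hr : r ∈ Ioc 0 x₀) (hlt : r < levelScale φ x₀ n) :
    φ r < 2⁻¹ ^ n * φ x₀ :=
  lt_of_not_ge fun h ↦ hlt.not_ge (levelScale_le hr h)

theorem endpoint_mem_superlevel (hx₀ : 0 < x₀) (hφ₀ : 0 ≤ φ x₀) (n : ℕ) :
    x₀ ∈ {x ∈ Ioc 0 x₀ | 2⁻¹ ^ n * φ x₀ ≤ φ x} :=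
  ⟨⟨hx₀, le_rfl⟩, mul_le_of_le_one_left hφ₀ (pow_le_one₀ (by norm_num) (by norm_num))⟩

theorem levelScale_le_right (hx₀ : 0 < x₀) (hφ₀ : 0 ≤ φ x₀) (n : ℕ) : levelScale φ x₀ n ≤ x₀ :=
  levelScale_le ⟨hx₀, le_rfl⟩ (endpoint_mem_superlevel hx₀ hφ₀ n).2

theorem le_apply_of_levelScale_lt (hφ : MonotoneOn φ (Ioc 0 x₀)) (hφ₀ : 0 ≤ φ x₀)
    (hr : r ∈ Ioc 0 x₀) (hlt : levelScale φ x₀ n < r) : 2⁻¹ ^ n * φ x₀ ≤ φ r := by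
  obtain ⟨x, ⟨hx, hφx⟩, hxr⟩ :=
    exists_lt_of_csInf_lt ⟨x₀, endpoint_mem_superlevel (hr.1.trans_le hr.2) hφ₀ n⟩ hlt
  exact hφx.trans (hφ hx hr hxr.le)

theorem isCantorScale_levelScale (hx₀ : 0 < x₀) (hφ₀ : 0 ≤ φ x₀)
    (hdouble : ∀ x ∈ Ioc 0 x₀, φ x ≤ 2 * φ (x / 2)) : IsCantorScale (levelScale φ x₀) where
  nonneg := levelScale_nonneg φ x₀
  succ_le_half n := by
    rw [le_div_iff₀ two_pos]
    refine le_csInf ⟨x₀, endpoint_mem_superlevel hx₀ hφ₀ n⟩ fun x ⟨hx, hφx⟩ ↦ ?_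
    rw [← le_div_iff₀ two_pos]
    refine levelScale_le ⟨half_pos hx.1, (half_le_self hx.1.le).trans hx.2⟩ ?_
    rw [pow_succ]
    linarith [hdouble x hx]

theorem apply_le_of_le_levelScale (hdouble : ∀ x ∈ Ioc 0 x₀, φ x ≤ 2 * φ (x / 2))
    (hr : r ∈ Ioc 0 x₀) (hle : r ≤ levelScale φ x₀ n) : φ r ≤ 2 * (2⁻¹ ^ n * φ x₀) := by
  have hlt : φ (r / 2) < 2⁻¹ ^ n * φ x₀ :=
    apply_lt_of_lt_levelScale ⟨half_pos hr.1, (half_le_self hr.1.le).trans hr.2⟩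
      ((half_lt_self hr.1).trans_le hle)
  linarith [hdouble r hr]

end LevelScale

theorem comparable_cantorMeasure_levelScale {φ : ℝ → ℝ} {x₀ r t : ℝ}
    (hφ : MonotoneOn φ (Ioc 0 x₀)) (hφ₀ : 0 ≤ φ x₀)
    (hdouble : ∀ x ∈ Ioc 0 x₀, φ x ≤ 2 * φ (x / 2)) (hr : r ∈ Ioc 0 x₀)
    (ht : t ∈ range (cantorPoint (levelScale φ x₀))) :
    φ r ≤ 4 * φ x₀ * (cantorMeasure (levelScale φ x₀)).real (Icc (t - r) (t + r)) ∧
      φ x₀ * (cantorMeasure (levelScale φ x₀)).real (Icc (t - r) (t + r)) ≤ 8 * φ r := by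
  have hx₀ : 0 < x₀ := hr.1.trans_le hr.2
  have hl := isCantorScale_levelScale hx₀ hφ₀ hdouble
  have := hl.isProbabilityMeasure_cantorMeasure
  obtain ⟨n, hn, hmin⟩ := hl.exists_generation hr.1
  set p := (cantorMeasure (levelScale φ x₀)).real (Icc (t - r) (t + r))
  have le_φ : 2⁻¹ ^ n * φ x₀ ≤ φ r := le_apply_of_levelScale_lt hφ hφ₀ hr hn
  have le_p : 2⁻¹ ^ n ≤ p := hl.pow_le_cantorMeasure_real_Icc hn.le ht
  obtain ⟨φ_le, p_le⟩ : φ r ≤ 4 * φ x₀ * 2⁻¹ ^ n ∧ p ≤ 8 * 2⁻¹ ^ n := by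
    cases n with
    | zero =>
      have : φ r ≤ φ x₀ := hφ hr ⟨hx₀, le_rfl⟩ hr.2
      have : p ≤ 1 := measureReal_le_one
      constructor <;> linarith
    | succ m =>
      have hm : r ≤ levelScale φ x₀ m := hmin m m.lt_succ_self
      have : φ r ≤ 2 * (2⁻¹ ^ m * φ x₀) := apply_le_of_le_levelScale hdouble hr hm
      have : p ≤ 4 * 2⁻¹ ^ m := hl.cantorMeasure_real_Icc_le hr.1 hm t
      rw [pow_succ]
      constructor <;> linarith
  constructor
  · exact φ_le.trans (by gcongr)
  · calc
      φ x₀ * p ≤ φ x₀ * (8 * 2⁻¹ ^ n) := by gcongr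
      _ = 8 * (2⁻¹ ^ n * φ x₀) := by ring
      _ ≤ 8 * φ r := by gcongr

theorem statement19_general {φ : ℝ → ℝ} {x₀ : ℝ} (hx₀ : 0 < x₀) (hφ : MonotoneOn φ (Ioc 0 x₀))
    (hφ₀ : 0 < φ x₀) (hdouble : ∀ x ∈ Ioc 0 x₀, φ x ≤ 2 * φ (x / 2)) :
    ∃ (E : Set ℝ) (ν : Measure ℝ) (c : ℝ), IsCompact E ∧ E ⊆ Icc 0 x₀ ∧
      IsProbabilityMeasure ν ∧ ν Eᶜ = 0 ∧ 1 ≤ c ∧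
      ∀ r ∈ Ioc (0 : ℝ) x₀, ∀ x ∈ E,
        ENNReal.ofReal (c⁻¹ * φ r) ≤ ν (Icc (x - r) (x + r)) ∧
        ν (Icc (x - r) (x + r)) ≤ ENNReal.ofReal (c * φ r) := by
  have hl := isCantorScale_levelScale hx₀ hφ₀.le hdouble
  have hν := hl.isProbabilityMeasure_cantorMeasure
  let c := max 1 (max (4 * φ x₀) (8 / φ x₀))
  refine ⟨range (cantorPoint (levelScale φ x₀)), cantorMeasure (levelScale φ x₀), c,
    hl.isCompact_range_cantorPoint, hl.range_cantorPoint_subset.trans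
      (Icc_subset_Icc_right (levelScale_le_right hx₀ hφ₀.le 0)),
    hν, hl.cantorMeasure_compl_range, le_max_left _ _, fun r hr x hx ↦ ?_⟩
  obtain ⟨φ_le, le_φ⟩ := comparable_cantorMeasure_levelScale hφ hφ₀.le hdouble hr hx
  have hc : 0 < c := one_pos.trans_le (le_max_left _ _)
  have four_mul_le : 4 * φ x₀ ≤ c := (le_max_left _ _).trans (le_max_right _ _)
  have eight_div_le : 8 / φ x₀ ≤ c := (le_max_right _ _).trans (le_max_right _ _)
  have hφr : 0 ≤ φ r :=
    nonneg_of_mul_nonneg_right (le_trans (by positivity) le_φ) (by norm_num)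
  rw [← ofReal_measureReal]
  constructor <;> refine ENNReal.ofReal_le_ofReal ?_
  · rw [inv_mul_le_iff₀ hc]
    exact φ_le.trans (by gcongr)
  · rw [mul_comm (φ x₀), ← le_div_iff₀ hφ₀, mul_div_right_comm] at le_φ
    exact le_φ.trans (by gcongr)

/-- Proposition 7.1: for a continuous increasing `φ` on `ℝ₊` with
`φ(0) = 0` and `φ(2x) < 2φ(x)` on `(0,x₀)`, there is a compact set `E_φ ⊆ [0,x₀]`
carrying a probability measure `ν` with `ν([x-r,x+r]) ≍ φ(r)` for `x ∈ E_φ` and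
`0 < r ≤ x₀`. -/
theorem statement19 (x₀ : ℝ) (hx₀ : x₀ ∈ Set.Ioo (0 : ℝ) 1)
    (φ : ℝ → ℝ) (hφc : ContinuousOn φ (Set.Ici 0))
    (hφmono : StrictMonoOn φ (Set.Ici 0)) (hφ0 : φ 0 = 0)
    (hφdoub : ∀ x ∈ Set.Ioo (0 : ℝ) x₀, φ (2 * x) < 2 * φ x) :
    ∃ (E : Set ℝ) (ν : Measure ℝ) (c : ℝ), IsCompact E ∧ E ⊆ Set.Icc 0 x₀ ∧
      IsProbabilityMeasure ν ∧ ν Eᶜ = 0 ∧ 1 ≤ c ∧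
      ∀ r ∈ Set.Ioc (0 : ℝ) x₀, ∀ x ∈ E,
        ENNReal.ofReal (c⁻¹ * φ r) ≤ ν (Set.Icc (x - r) (x + r)) ∧
        ν (Set.Icc (x - r) (x + r)) ≤ ENNReal.ofReal (c * φ r) := by
  refine statement19_general hx₀.1
    (hφmono.monotoneOn.mono (Ioc_subset_Ioi_self.trans Ioi_subset_Ici_self))
    (hφ0 ▸ hφmono self_mem_Ici hx₀.1.le hx₀.1) fun x hx ↦ ?_
  simpa only [mul_div_cancel₀ x two_ne_zero] using
    (hφdoub (x / 2) ⟨half_pos hx.1, (half_lt_self hx.1).trans_le hx.2⟩).le
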